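/- For w, y ∈ W_ext the following two conditions are equivalent: (1) there exists μ ∈ Y such that t_μ w and t_μ y belong to W_ext⁺ and t_μ w ≤ t_μ y; (2) for every μ ∈ Y such that t_μ w and t_μ y belong to W_ext⁺, one has t_μ w ≤ t_μ y. -/

import Mathlib

open scoped Classical TensorProduct

noncomputable section

namespace SemiInf

/-- The data of a root datum together with its (finite) Weyl group:
finite-rank free `ℤ`-modules `X` and `Y` with a pairing, a finite group `W`
acting on both, a finite set of roots with a subset of positive roots, and a
coroot map. The axioms are collected in `Ctx.IsRootDatum`. -/
structure Ctx where
  X : Type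
  Y : Type
  [addX : AddCommGroup X]
  [addY : AddCommGroup Y]
  W : Type
  [grpW : Group W]
  [finW : Fintype W]
  [actX : DistribMulAction W X]
  [actY : DistribMulAction W Y]
  pair : Y →+ X →+ ℤ
  roots : Finset X
  pos : Finset X
  coroot : X → Y

attribute [instance] Ctx.addX Ctx.addY Ctx.grpW Ctx.finW Ctx.actX Ctx.actY

namespace Ctx

variable (C : Ctx)

/-- The axioms of a root datum (free finite-rank lattices, perfect pairing,
finite reduced crystallographic root system with a system of positive roots),
with `W` its Weyl group acting faithfully on `X` and `Y`. -/
structure IsRootDatum : Prop where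
  free_X : Module.Free ℤ C.X
  finite_X : Module.Finite ℤ C.X
  free_Y : Module.Free ℤ C.Y
  finite_Y : Module.Finite ℤ C.Y
  perfect_left : Function.Bijective fun y : C.Y => C.pair y
  perfect_right : Function.Bijective fun x : C.X => C.pair.flip x
  pos_subset : C.pos ⊆ C.roots
  root_decomp : ∀ α ∈ C.roots, α ∈ C.pos ∨ -α ∈ C.pos
  pos_neg_disjoint : ∀ α ∈ C.pos, -α ∉ C.pos
  zero_not_root : (0 : C.X) ∉ C.roots
  reduced : ∀ α ∈ C.roots, ∀ n : ℤ, n • α ∈ C.roots → n = 1 ∨ n = -1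
  coroot_self : ∀ α ∈ C.roots, C.pair (C.coroot α) α = 2
  isReflection : ∀ α ∈ C.roots, ∃ s : C.W,
    (∀ x : C.X, s • x = x - C.pair (C.coroot α) x • α) ∧
    (∀ y : C.Y, s • y = y - C.pair y α • C.coroot α)
  weyl_gen : ∀ w : C.W, w ∈ Subgroup.closure {s : C.W | ∃ α ∈ C.roots,
    (∀ x : C.X, s • x = x - C.pair (C.coroot α) x • α) ∧
    (∀ y : C.Y, s • y = y - C.pair y α • C.coroot α)}
  faithful_X : ∀ w : C.W, (∀ x : C.X, w • x = x) → w = 1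
  faithful_Y : ∀ w : C.W, (∀ y : C.Y, w • y = y) → w = 1
  pair_inv : ∀ (w : C.W) (y : C.Y) (x : C.X), C.pair (w • y) (w • x) = C.pair y x
  roots_stable : ∀ (w : C.W), ∀ α ∈ C.roots, w • α ∈ C.roots
  smul_coroot : ∀ (w : C.W), ∀ α ∈ C.roots, w • C.coroot α = C.coroot (w • α)
  exists_regular_X : ∃ ξ : C.X, ∀ α ∈ C.pos, 0 < C.pair (C.coroot α) ξ
  exists_regular_Y : ∃ η : C.Y, ∀ α ∈ C.pos, 0 < C.pair η α

/-- The length function of the finite Weyl group: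
`ℓ(w) = #{α ∈ 𝔯₊ : w(α) ∈ −𝔯₊}`. -/
def lenW (w : C.W) : ℕ := (C.pos.filter fun α => -(w • α) ∈ C.pos).card

/-- `w` is the longest element of the finite Weyl group iff it maps every
positive root to a negative root. -/
def IsLongest (w : C.W) : Prop := ∀ α ∈ C.pos, -(w • α) ∈ C.pos

/-- The set `Y₊` of dominant cocharacters. -/
def Ypos : Set C.Y := {l | ∀ α ∈ C.pos, 0 ≤ C.pair l α}

/-- The set `Y₊₊` of strictly dominant cocharacters. -/
def Yppos : Set C.Y := {l | ∀ α ∈ C.pos, 0 < C.pair l α}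

/-- The action of `W` on `Multiplicative Y`, as a homomorphism to `MulAut`. -/
def φext : C.W →* MulAut (Multiplicative C.Y) where
  toFun w :=
    { toFun := fun y => Multiplicative.ofAdd (w • Multiplicative.toAdd y)
      invFun := fun y => Multiplicative.ofAdd (w⁻¹ • Multiplicative.toAdd y)
      left_inv := fun y => by simp
      right_inv := fun y => by simp
      map_mul' := fun a b => by simp [smul_add] }
  map_one' := by
    apply MulEquiv.ext
    intro y
    simp
  map_mul' w₁ w₂ := by
    apply MulEquiv.ext
    intro y
    simp [mul_smul]

/-- The extended affine Weyl group `W_ext = W_f ⋉ Y`. -/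
abbrev Wext : Type := Multiplicative C.Y ⋊[C.φext] C.W

/-- The translation element `t_λ ∈ W_ext` associated with `λ ∈ Y`. -/
def t (l : C.Y) : C.Wext := SemidirectProduct.inl (Multiplicative.ofAdd l)

/-- The canonical embedding of the finite Weyl group in `W_ext`. -/
def σ (w : C.W) : C.Wext := SemidirectProduct.inr w

/-- The length function on `W_ext`, defined by
`ℓ(w t_λ) = Σ_{α ∈ 𝔯₊, w(α) ∈ 𝔯₊} |⟨λ,α⟩| + Σ_{α ∈ 𝔯₊, w(α) ∈ −𝔯₊} |1 − ⟨λ,α⟩|`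
(an element `g` of the semidirect product equals `w t_λ` for `w = g.right`
and `λ = w⁻¹ • g.left`). -/
def len (g : C.Wext) : ℕ :=
  ∑ α ∈ C.pos,
    if g.right • α ∈ C.pos
      then (C.pair (g.right⁻¹ • Multiplicative.toAdd g.left) α).natAbs
      else ((1 : ℤ) - C.pair (g.right⁻¹ • Multiplicative.toAdd g.left) α).natAbs

/-- The coroot lattice `ℤ𝔯∨ ⊆ Y`. -/
def corootLattice : AddSubgroup C.Y := AddSubgroup.closure (C.coroot '' ↑C.roots)

/-- The affine Weyl group `W_aff = W_f ⋉ ℤ𝔯∨`, as a subgroup of `W_ext`. -/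
def Waff : Subgroup C.Wext :=
  Subgroup.closure ((fun l => C.t l) '' ↑C.corootLattice ∪ Set.range C.σ)

/-- The set of elements of length `1` of `W_aff` (the simple affine
reflections). -/
def Saff : Set C.Wext := {g | g ∈ C.Waff ∧ C.len g = 1}

/-- The set `Ω` of elements of length `0` of `W_ext`. -/
def OmegaSet : Set C.Wext := {g | C.len g = 0}

/-- The Bruhat order on `W_aff`: `u ≤ v` iff some reduced expression of `v`
(as a word in `S_aff`) admits a subword which is an expression of `u`. -/
def bruhatAff (u v : C.Wext) : Prop :=
  ∃ l : List C.Wext, (∀ s ∈ l, s ∈ C.Saff) ∧ l.prod = v ∧ l.length = C.len v ∧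
    ∃ l' : List C.Wext, l'.Sublist l ∧ l'.prod = u

/-- The Bruhat order on `W_ext`, extending the Bruhat order of `W_aff` by
`ω u ≤ ω' v` iff `ω = ω'` and `u ≤ v`, for `ω, ω' ∈ Ω` and `u, v ∈ W_aff`. -/
def bruhat (x y : C.Wext) : Prop :=
  ∃ ω u v : C.Wext, ω ∈ C.OmegaSet ∧ u ∈ C.Waff ∧ v ∈ C.Waff ∧
    x = ω * u ∧ y = ω * v ∧ C.bruhatAff u v

/-- The set `W_ext⁺` of `w ∈ W_ext` such that `ℓ(t_μ w) = ℓ(t_μ) + ℓ(w)` for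
every dominant `μ`. -/
def WextPlus : Set C.Wext :=
  {w | ∀ μ ∈ C.Ypos, C.len (C.t μ * w) = C.len (C.t μ) + C.len w}

/-- The semiinfinite order on `W_ext`. -/
def siLE (w y : C.Wext) : Prop :=
  ∃ μ : C.Y, C.t μ * w ∈ C.WextPlus ∧ C.t μ * y ∈ C.WextPlus ∧
    C.bruhat (C.t μ * w) (C.t μ * y)

/-- The rational vector space `ℚ ⊗ Y`. -/
abbrev QY : Type := ℚ ⊗[ℤ] C.Y

/-- The canonical map `Y → ℚ ⊗ Y`. -/
def ι : C.Y →ₗ[ℤ] C.QY := TensorProduct.mk ℤ ℚ C.Y 1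

/-- The finite set of positive coroots. -/
def posCoroots : Finset C.Y := C.pos.image C.coroot

/-- Half the sum of the positive coroots, as an element of `ℚ ⊗ Y`. -/
def rhoCheck : C.QY := (2⁻¹ : ℚ) ⊗ₜ[ℤ] (∑ β ∈ C.posCoroots, β)

/-- The set of Kostant partitions of `v ∈ ℚ ⊗ Y`: functions
`φ : 𝔯∨₊ → ℤ≥0` with `Σ_α φ(α)·α = v`. -/
def KostantSet (v : C.QY) : Set (↥C.posCoroots → ℕ) :=
  {φ | ∑ β : ↥C.posCoroots, (φ β) • C.ι (β : C.Y) = v}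

/-- Kostant's partition function. -/
def KostantP (v : C.QY) : ℕ := (C.KostantSet v).ncard

/-- The action of `w ∈ W` on `ℚ ⊗ Y`. -/
def actQ (w : C.W) : C.QY →ₗ[ℤ] C.QY :=
  LinearMap.lTensor ℚ ((DistribMulAction.toAddMonoidHom C.Y w).toIntLinearMap)

/-- The simple roots: positive roots which are not sums of two positive
roots. -/
def simpleRoots : Finset C.X :=
  C.pos.filter fun α => ¬ ∃ β ∈ C.pos, ∃ γ ∈ C.pos, α = β + γ

end Ctx

end SemiInf

/-!
If `ℓ (z x) = ℓ z + ℓ x` and `ℓ (z y) = ℓ z + ℓ y`, then `z x ≤ z y ↔ x ≤ y`: peel off one simple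
reflection of `z` at a time. For `μ₁, μ₂ ∈ Y` as in the two conditions, choose `ν` such that
`ν - μ₁` and `ν - μ₂` are dominant. By definition of `W_ext⁺` the cancellation applies to
`t_ν w = t_(ν - μ) (t_μ w)` for both, so the comparisons at `μ₁` and at `μ₂` are equivalent to the
one at `ν`. A suitable `μ` exists since `t_μ w ∈ W_ext⁺` for all sufficiently dominant `μ`.

The Bruhat theory of `W_ext` rests on Dyer's reflection cocycle `N`, sending `g` to the set of
reflections inverted by `g`, with `N(g k) = k⁻¹ N(g) k + N(k)` (symmetric difference). Counting
inversions recovers `ℓ`. If `g` inverts some positive affine root, then an inversion of minimal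
height is simple: a positive affine root which is not simple is a sum of two affine functions of
smaller positive height, each an affine root or a constant, and `g` keeps these summands positive.
-/

/-- A *reflection cocycle* on a group `G`, after Dyer: a conjugation-stable set `refls` of
involutions and, for each `g : G`, the finite set `inv g` of the reflections *inverted* by `g`.
For a Coxeter group this is `inv g = {t | ℓ (g * t) < ℓ g}`. Nontrivial elements inverting no
reflection are allowed, so that extended affine Weyl groups are covered. -/
structure ReflectionCocycle (G : Type*) [Group G] where
  refls : Set G
  inv : G → Finset G
  mul_self : ∀ t ∈ refls, t * t = 1
  conj_mem : ∀ g, ∀ t ∈ refls, g * t * g⁻¹ ∈ refls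
  inv_subset : ∀ g, ∀ t ∈ inv g, t ∈ refls
  self_mem_inv : ∀ t ∈ refls, t ∈ inv t
  mem_inv_mul : ∀ g k, ∀ t ∈ refls, (t ∈ inv (g * k) ↔ (t ∈ inv k ↔ k * t * k⁻¹ ∉ inv g))
  exists_simple : ∀ g, (inv g).Nonempty → ∃ s ∈ inv g, inv s = {s}

namespace ReflectionCocycle

variable {G : Type*} [Group G] (R : ReflectionCocycle G)

/-- The length of `g`: the number of reflections inverted by `g`. -/
def length (g : G) : ℕ := (R.inv g).card

/-- A simple reflection is one that inverts no reflection but itself. -/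
def IsSimple (s : G) : Prop := R.inv s = {s}

variable {R} {g k s t x y z ω : G} {l l' : List G}

/-! ### Length -/

theorem inv_one : R.inv 1 = ∅ := by
  refine Finset.eq_empty_of_forall_notMem fun t ht => ?_
  have := R.mem_inv_mul 1 1 t (R.inv_subset 1 t ht)
  simp_all

theorem length_one : R.length 1 = 0 := by simp [length, inv_one]

theorem conj_mem_inv_inv_iff (ht : t ∈ R.refls) :
    g * t * g⁻¹ ∈ R.inv g⁻¹ ↔ t ∈ R.inv g := by
  have := R.mem_inv_mul g⁻¹ g t ht
  rw [inv_mul_cancel, inv_one] at this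
  simp only [Finset.notMem_empty, false_iff] at this
  tauto

theorem conj_mem_inv_iff_mem_inv_inv (ht : t ∈ R.refls) :
    g⁻¹ * t * g ∈ R.inv g ↔ t ∈ R.inv g⁻¹ := by
  simpa only [inv_inv] using conj_mem_inv_inv_iff (g := g⁻¹) ht

theorem length_inv : R.length g⁻¹ = R.length g := by
  refine Finset.card_nbij' (fun t => g⁻¹ * t * g) (fun t => g * t * g⁻¹) ?_ ?_ ?_ ?_
  · exact fun t ht => (conj_mem_inv_iff_mem_inv_inv (R.inv_subset _ _ ht)).2 ht
  · exact fun t ht => (conj_mem_inv_inv_iff (R.inv_subset _ _ ht)).2 ht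
  · intro t _
    group
  · intro t _
    group

theorem length_mul_le : R.length (g * k) ≤ R.length g + R.length k := by
  have hsub : R.inv (g * k) ⊆ (R.inv g).image (fun t => k⁻¹ * t * k) ∪ R.inv k := by
    intro t ht
    rw [Finset.mem_union, Finset.mem_image]
    by_cases htk : t ∈ R.inv k
    · exact Or.inr htk
    · refine Or.inl ⟨k * t * k⁻¹, ?_, by group⟩
      have := R.mem_inv_mul g k t (R.inv_subset _ _ ht)
      tauto
  calc R.length (g * k) ≤ _ := Finset.card_le_card hsub
    _ ≤ _ := Finset.card_union_le _ _
    _ ≤ R.length g + R.length k := Nat.add_le_add_right Finset.card_image_le _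

theorem inv_mul_of_length_eq_zero (hω : R.length ω = 0) : R.inv (ω * g) = R.inv g := by
  have hω' : R.inv ω = ∅ := Finset.card_eq_zero.1 hω
  ext t
  by_cases ht : t ∈ R.refls
  · simp [R.mem_inv_mul ω g t ht, hω']
  · exact iff_of_false (mt (R.inv_subset _ t) ht) (mt (R.inv_subset _ t) ht)

theorem length_mul_of_length_eq_zero (hω : R.length ω = 0) :
    R.length (ω * g) = R.length g := by
  rw [length, length, inv_mul_of_length_eq_zero hω]

/-! ### Simple reflections -/

namespace IsSimple

theorem mem_inv (hs : R.IsSimple s) : s ∈ R.inv s := by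
  rw [hs]
  exact Finset.mem_singleton_self s

theorem mem_refls (hs : R.IsSimple s) : s ∈ R.refls := R.inv_subset s s hs.mem_inv

theorem length_eq_one (hs : R.IsSimple s) : R.length s = 1 := by
  rw [length, hs, Finset.card_singleton]

theorem mul_self (hs : R.IsSimple s) : s * s = 1 := R.mul_self s hs.mem_refls

theorem mul_mul_cancel (hs : R.IsSimple s) : s * (s * g) = g := by
  rw [← mul_assoc, hs.mul_self, one_mul]

theorem inv_eq (hs : R.IsSimple s) : s⁻¹ = s := inv_eq_of_mul_eq_one_left hs.mul_self

theorem mem_inv_mul_iff (hs : R.IsSimple s) (ht : t ∈ R.refls) :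
    t ∈ R.inv (s * g) ↔ (t ∈ R.inv g ↔ g * t * g⁻¹ ≠ s) := by
  rw [R.mem_inv_mul s g t ht, hs, Finset.mem_singleton]

theorem length_mul_of_notMem (hs : R.IsSimple s) (hg : s ∉ R.inv g⁻¹) :
    R.length (s * g) = R.length g + 1 := by
  have hnot : g⁻¹ * s * g ∉ R.inv g := mt (conj_mem_inv_iff_mem_inv_inv hs.mem_refls).1 hg
  suffices R.inv (s * g) = insert (g⁻¹ * s * g) (R.inv g) by
    rw [length, this, Finset.card_insert_of_notMem hnot, length]
  ext t
  rw [Finset.mem_insert]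
  have hconj : g * t * g⁻¹ = s ↔ t = g⁻¹ * s * g := by
    constructor <;> rintro rfl <;> group
  by_cases ht : t ∈ R.refls
  · rw [hs.mem_inv_mul_iff ht, Ne, hconj]
    by_cases hts : t = g⁻¹ * s * g
    · simp [hts, hnot]
    · simp [hts]
  · refine iff_of_false (mt (R.inv_subset _ t) ht) ?_
    rintro (rfl | htg)
    · exact ht (by simpa using R.conj_mem g⁻¹ s hs.mem_refls)
    · exact ht (R.inv_subset g t htg)

theorem length_mul_of_mem (hs : R.IsSimple s) (hg : s ∈ R.inv g⁻¹) :
    R.length (s * g) + 1 = R.length g := by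
  have hnot : s ∉ R.inv (s * g)⁻¹ := by
    rw [mul_inv_rev, hs.inv_eq, R.mem_inv_mul _ _ s hs.mem_refls]
    simp [hs.mem_inv, hg]
  rw [← hs.length_mul_of_notMem hnot, hs.mul_mul_cancel]

theorem length_mul_right_of_mem (hs : R.IsSimple s) (hg : s ∈ R.inv g) :
    R.length (g * s) + 1 = R.length g := by
  have := hs.length_mul_of_mem (g := g⁻¹) (by rwa [inv_inv])
  rwa [← length_inv, mul_inv_rev, inv_inv, hs.inv_eq, length_inv (g := g)] at this

theorem length_mul_le (hs : R.IsSimple s) : R.length (s * g) ≤ R.length g + 1 := by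
  rw [add_comm, ← hs.length_eq_one]
  exact ReflectionCocycle.length_mul_le

end IsSimple

theorem exists_isSimple_mem_inv (hg : R.length g ≠ 0) : ∃ s, R.IsSimple s ∧ s ∈ R.inv g := by
  obtain ⟨s, hsg, hs⟩ := R.exists_simple g (Finset.card_ne_zero.1 hg)
  exact ⟨s, hs, hsg⟩

/-! ### Words in the simple reflections -/

theorem length_prod_le (hl : ∀ s ∈ l, R.IsSimple s) : R.length l.prod ≤ l.length := by
  induction l with
  | nil => simp [length_one]
  | cons s l ih =>
    rw [List.forall_mem_cons] at hl
    rw [List.prod_cons, List.length_cons]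
    exact hl.1.length_mul_le.trans (Nat.add_le_add_right (ih hl.2) 1)

theorem exists_sublist_prod_eq_prod_mul (hl : ∀ s ∈ l, R.IsSimple s) (ht : t ∈ R.inv l.prod) :
    ∃ l' : List G, l'.Sublist l ∧ l'.length + 1 = l.length ∧ l'.prod = l.prod * t := by
  induction l with
  | nil => simp [inv_one] at ht
  | cons s l ih =>
    rw [List.forall_mem_cons] at hl
    have ht' := R.inv_subset _ t ht
    rw [List.prod_cons, hl.1.mem_inv_mul_iff ht'] at ht
    by_cases htl : t ∈ R.inv l.prod
    · obtain ⟨l', hsub, hlen, hprod⟩ := ih hl.2 htl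
      exact ⟨s :: l', hsub.cons_cons s, by simp [hlen], by simp [hprod, mul_assoc]⟩
    · have hconj : l.prod * t * l.prod⁻¹ = s := by tauto
      have hst : s * l.prod = l.prod * t := by rw [← hconj, inv_mul_cancel_right]
      refine ⟨l, List.sublist_cons_self s l, rfl, ?_⟩
      rw [List.prod_cons, hst, mul_assoc, R.mul_self t ht', mul_one]

theorem exists_eq_mul_prod (R : ReflectionCocycle G) (g : G) :
    ∃ (ω : G) (l : List G), R.length ω = 0 ∧ (∀ s ∈ l, R.IsSimple s) ∧
      l.length = R.length l.prod ∧ g = ω * l.prod := by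
  suffices ∃ (ω : G) (l : List G), R.length ω = 0 ∧ (∀ s ∈ l, R.IsSimple s) ∧
      l.length = R.length g ∧ g = ω * l.prod by
    obtain ⟨ω, l, hω, hl, hlen, rfl⟩ := this
    exact ⟨ω, l, hω, hl, by rw [hlen, length_mul_of_length_eq_zero hω], rfl⟩
  induction hn : R.length g generalizing g with
  | zero => exact ⟨g, [], hn, by simp, rfl, by simp⟩
  | succ n ih =>
    obtain ⟨s, hs, hsg⟩ := exists_isSimple_mem_inv (R := R) (g := g) (by omega)
    have hlen := hs.length_mul_right_of_mem hsg
    obtain ⟨ω, l, hω, hl, hln, hprod⟩ := ih (g * s) (by omega)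
    refine ⟨ω, l ++ [s], hω, ?_, by simp [hln], ?_⟩
    · simpa [or_imp, forall_and] using ⟨hl, hs⟩
    · rw [List.prod_append, List.prod_singleton, ← mul_assoc, ← hprod, mul_assoc, hs.mul_self,
        mul_one]

theorem prod_eq_one_of_length_eq_zero (hl : ∀ s ∈ l, R.IsSimple s) (h0 : R.length l.prod = 0) :
    l.prod = 1 := by
  induction hn : l.length using Nat.strong_induction_on generalizing l with
  | _ n ih =>
    cases l with
    | nil => rfl
    | cons s l =>
      rw [List.forall_mem_cons] at hl
      rw [List.prod_cons] at h0 ⊢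
      have hsl : s ∈ R.inv l.prod⁻¹ := by
        by_contra hsl
        have := hl.1.length_mul_of_notMem hsl
        omega
      obtain ⟨l', hsub, hlen, hprod⟩ := exists_sublist_prod_eq_prod_mul hl.2
        ((conj_mem_inv_iff_mem_inv_inv hl.1.mem_refls).2 hsl)
      replace hprod : l'.prod = s * l.prod := by rw [hprod]; group
      rw [List.length_cons] at hn
      rw [← hprod] at h0 ⊢
      exact ih l'.length (by omega) (fun s hs => hl.2 s (hsub.subset hs)) h0 rfl

/-! ### The subgroup generated by the reflections -/

theorem prod_mem_closure_refls (hl : ∀ s ∈ l, R.IsSimple s) :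
    l.prod ∈ Subgroup.closure R.refls :=
  list_prod_mem fun s hs => Subgroup.subset_closure (hl s hs).mem_refls

theorem closure_refls_eq_closure_isSimple :
    Subgroup.closure R.refls = Subgroup.closure {s | R.IsSimple s} := by
  refine le_antisymm ?_ (Subgroup.closure_mono fun s hs => hs.mem_refls)
  rw [Subgroup.closure_le]
  intro t ht
  obtain ⟨ω, l, hω, hl, -, htl⟩ := R.exists_eq_mul_prod t
  have htinv : t ∈ R.inv l.prod := by
    rw [← inv_mul_of_length_eq_zero hω, ← htl]
    exact R.self_mem_inv t ht
  obtain ⟨l', hsub, -, hprod⟩ := exists_sublist_prod_eq_prod_mul hl htinv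
  have ht_eq : t = l.prod⁻¹ * l'.prod := by rw [hprod, inv_mul_cancel_left]
  rw [ht_eq]
  exact mul_mem (inv_mem (list_prod_mem fun s hs => Subgroup.subset_closure (hl s hs)))
    (list_prod_mem fun s hs => Subgroup.subset_closure (hl s (hsub.subset hs)))

theorem eq_one_of_mem_closure_refls (hg : g ∈ Subgroup.closure R.refls) (h0 : R.length g = 0) :
    g = 1 := by
  rw [closure_refls_eq_closure_isSimple, ← Subgroup.mem_toSubmonoid,
    Subgroup.closure_toSubmonoid] at hg
  obtain ⟨l, hl, rfl⟩ := Submonoid.exists_list_of_mem_closure hg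
  refine prod_eq_one_of_length_eq_zero (fun s hs => ?_) h0
  rcases hl s hs with hs | hs
  · exact hs
  · have hs' : R.IsSimple s⁻¹ := hs
    rwa [← inv_inv s, hs'.inv_eq]

theorem isSimple_iff_mem_closure_and_length :
    R.IsSimple s ↔ s ∈ Subgroup.closure R.refls ∧ R.length s = 1 := by
  refine ⟨fun hs => ⟨Subgroup.subset_closure hs.mem_refls, hs.length_eq_one⟩, ?_⟩
  rintro ⟨hmem, hlen⟩
  obtain ⟨r, hr, hrs⟩ := exists_isSimple_mem_inv (R := R) (g := s) (by omega)
  have hsr : s * r = 1 := eq_one_of_mem_closure_refls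
    (mul_mem hmem (Subgroup.subset_closure hr.mem_refls))
    (by have := hr.length_mul_right_of_mem hrs; omega)
  rwa [eq_inv_of_mul_eq_one_left hsr, hr.inv_eq]

/-! ### The Bruhat order -/

/-- An edge of the Bruhat graph: right multiplication by a reflection `t` that increases the length,
encoded as `t` not being inverted. -/
def BruhatStep (R : ReflectionCocycle G) (x y : G) : Prop :=
  ∃ t ∈ R.refls, t ∉ R.inv x ∧ y = x * t

/-- The Bruhat order, defined by chains in the Bruhat graph. -/
def BruhatLE (R : ReflectionCocycle G) : G → G → Prop := Relation.ReflTransGen R.BruhatStep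

theorem BruhatStep.mul_left_of_length_eq_zero (hω : R.length ω = 0) (hxy : R.BruhatStep x y) :
    R.BruhatStep (ω * x) (ω * y) := by
  obtain ⟨t, ht, htx, rfl⟩ := hxy
  exact ⟨t, ht, by rwa [inv_mul_of_length_eq_zero hω], (mul_assoc _ _ _).symm⟩

theorem BruhatLE.mul_left_of_length_eq_zero (hω : R.length ω = 0) (hxy : R.BruhatLE x y) :
    R.BruhatLE (ω * x) (ω * y) :=
  Relation.ReflTransGen.lift (ω * ·) (fun _ _ => BruhatStep.mul_left_of_length_eq_zero hω) _ _ hxy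

theorem bruhatLE_mul_left_iff_of_length_eq_zero (hω : R.length ω = 0) :
    R.BruhatLE (ω * x) (ω * y) ↔ R.BruhatLE x y := by
  refine ⟨fun hxy => ?_, BruhatLE.mul_left_of_length_eq_zero hω⟩
  simpa using hxy.mul_left_of_length_eq_zero (ω := ω⁻¹) (by rwa [length_inv])

namespace IsSimple

theorem bruhatStep_mul (hs : R.IsSimple s) (hx : s ∉ R.inv x⁻¹) : R.BruhatStep x (s * x) :=
  ⟨x⁻¹ * s * x, by simpa using R.conj_mem x⁻¹ s hs.mem_refls,
    mt (conj_mem_inv_iff_mem_inv_inv hs.mem_refls).1 hx, by group⟩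

theorem bruhatStep_mul_mul_or_eq (hs : R.IsSimple s) (hxy : R.BruhatStep x y) :
    R.BruhatStep (s * x) (s * y) ∨ s * x = y := by
  obtain ⟨t, ht, htx, rfl⟩ := hxy
  by_cases hconj : x * t * x⁻¹ = s
  · right
    rw [← hconj, inv_mul_cancel_right]
  · left
    exact ⟨t, ht, by simp [hs.mem_inv_mul_iff ht, htx, hconj], (mul_assoc _ _ _).symm⟩

theorem bruhatLE_mul_or_bruhatLE_mul_mul (hs : R.IsSimple s) (hxy : R.BruhatLE x y) :
    R.BruhatLE (s * x) y ∨ R.BruhatLE (s * x) (s * y) := by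
  induction hxy with
  | refl => exact Or.inr .refl
  | tail _ hyz ih =>
    rcases ih with ih | ih
    · exact Or.inl (ih.tail hyz)
    · rcases hs.bruhatStep_mul_mul_or_eq hyz with hstep | rfl
      · exact Or.inr (ih.tail hstep)
      · exact Or.inl ih

theorem bruhatLE_of_bruhatLE_mul (hs : R.IsSimple s) (hy : s ∉ R.inv y⁻¹)
    (hxy : R.BruhatLE x y) : R.BruhatLE (s * x) (s * y) :=
  (hs.bruhatLE_mul_or_bruhatLE_mul_mul hxy).elim (·.tail (hs.bruhatStep_mul hy)) id

theorem bruhatLE_or_bruhatLE_mul_mul (hs : R.IsSimple s) (hxy : R.BruhatLE x y) :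
    R.BruhatLE x (s * y) ∨ R.BruhatLE (s * x) (s * y) := by
  induction hxy using Relation.ReflTransGen.head_induction_on with
  | refl => exact Or.inr .refl
  | head hxz _ ih =>
    rcases ih with ih | ih
    · exact Or.inl (ih.head hxz)
    · rcases hs.bruhatStep_mul_mul_or_eq hxz with hstep | rfl
      · exact Or.inr (ih.head hstep)
      · exact Or.inl (by rwa [hs.mul_mul_cancel] at ih)

theorem bruhatLE_mul_mul_iff (hs : R.IsSimple s) (hx : s ∉ R.inv x⁻¹) (hy : s ∉ R.inv y⁻¹) :
    R.BruhatLE (s * x) (s * y) ↔ R.BruhatLE x y := by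
  refine ⟨fun hxy => ?_, hs.bruhatLE_of_bruhatLE_mul hy⟩
  have := hs.bruhatLE_or_bruhatLE_mul_mul hxy
  simp only [hs.mul_mul_cancel] at this
  exact this.elim (·.head (hs.bruhatStep_mul hx)) id

theorem length_mul_mul_of_mem (hs : R.IsSimple s) (hz : s ∈ R.inv z⁻¹)
    (hx : R.length (z * x) = R.length z + R.length x) :
    R.length (s * z * x) = R.length (s * z) + R.length x ∧ s ∉ R.inv (s * z * x)⁻¹ := by
  have hsz := hs.length_mul_of_mem hz
  have hle : R.length (s * z * x) ≤ _ := ReflectionCocycle.length_mul_le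
  have hge := hs.length_mul_le (g := s * z * x)
  rw [mul_assoc, hs.mul_mul_cancel, ← mul_assoc] at hge
  refine ⟨by omega, fun hmem => ?_⟩
  have := hs.length_mul_of_mem hmem
  rw [mul_assoc, hs.mul_mul_cancel, ← mul_assoc] at this
  omega

end IsSimple

theorem bruhatLE_mul_left_iff (hx : R.length (z * x) = R.length z + R.length x)
    (hy : R.length (z * y) = R.length z + R.length y) :
    R.BruhatLE (z * x) (z * y) ↔ R.BruhatLE x y := by
  induction hn : R.length z generalizing z with
  | zero => exact bruhatLE_mul_left_iff_of_length_eq_zero hn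
  | succ n ih =>
    obtain ⟨s, hs, hsz⟩ :=
      exists_isSimple_mem_inv (R := R) (g := z⁻¹) (by rw [length_inv]; omega)
    have hlen := hs.length_mul_of_mem hsz
    obtain ⟨hx_len, hx_notMem⟩ := hs.length_mul_mul_of_mem hsz hx
    obtain ⟨hy_len, hy_notMem⟩ := hs.length_mul_mul_of_mem hsz hy
    rw [← ih hx_len hy_len (by omega), ← hs.bruhatLE_mul_mul_iff hx_notMem hy_notMem,
      mul_assoc s z, mul_assoc s z, hs.mul_mul_cancel, hs.mul_mul_cancel]

theorem bruhatLE_prod_of_sublist (hl : ∀ s ∈ l, R.IsSimple s)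
    (hred : l.length = R.length l.prod) (hsub : l'.Sublist l) :
    R.BruhatLE l'.prod l.prod := by
  induction l generalizing l' with
  | nil =>
    rw [List.sublist_nil.1 hsub]
    exact .refl
  | cons s l ih =>
    rw [List.forall_mem_cons] at hl
    rw [List.prod_cons, List.length_cons] at hred
    have hle := length_prod_le hl.2
    have hge := hl.1.length_mul_le (g := l.prod)
    have hs : s ∉ R.inv l.prod⁻¹ := by
      intro hmem
      have := hl.1.length_mul_of_mem hmem
      omega
    rw [List.prod_cons]
    rcases List.sublist_cons_iff.1 hsub with hsub_tail | ⟨r, rfl, hsub_tail⟩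
    · exact (ih hl.2 (by omega) hsub_tail).tail (hl.1.bruhatStep_mul hs)
    · rw [List.prod_cons]
      exact hl.1.bruhatLE_of_bruhatLE_mul hs (ih hl.2 (by omega) hsub_tail)

theorem BruhatLE.exists_sublist_prod_eq (hl : ∀ s ∈ l, R.IsSimple s)
    (hx : R.BruhatLE x l.prod) : ∃ l' : List G, l'.Sublist l ∧ l'.prod = x := by
  induction hx using Relation.ReflTransGen.head_induction_on with
  | refl => exact ⟨l, List.Sublist.refl l, rfl⟩
  | @head x _ hxz _ ih =>
    obtain ⟨l₁, hsub₁, hprod₁⟩ := ih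
    obtain ⟨t, ht, htx, rfl⟩ := hxz
    have ht_inv : t ∈ R.inv (x * t) := by
      rw [R.mem_inv_mul x t t ht, mul_inv_cancel_right]
      exact iff_of_true (R.self_mem_inv t ht) htx
    obtain ⟨l₂, hsub₂, -, hprod₂⟩ := exists_sublist_prod_eq_prod_mul
      (fun s hs => hl s (hsub₁.subset hs)) (hprod₁ ▸ ht_inv)
    exact ⟨l₂, hsub₂.trans hsub₁, by rw [hprod₂, hprod₁, mul_assoc, R.mul_self t ht, mul_one]⟩

theorem bruhatLE_prod_iff_exists_sublist (hl : ∀ s ∈ l, R.IsSimple s)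
    (hred : l.length = R.length l.prod) :
    R.BruhatLE x l.prod ↔ ∃ l' : List G, l'.Sublist l ∧ l'.prod = x := by
  refine ⟨BruhatLE.exists_sublist_prod_eq hl, ?_⟩
  rintro ⟨l', hsub, rfl⟩
  exact bruhatLE_prod_of_sublist hl hred hsub

end ReflectionCocycle

namespace SemiInf.Ctx

variable {C : Ctx}

/-! ### Affine roots and affine reflections -/

/-- The action of the extended affine Weyl group on affine functions. The pair `(α, n)` stands for
the function `v ↦ ⟨v, α⟩ + n`, and it is an affine root when `α` is a root. -/
def affineAct (C : Ctx) (g : C.Wext) : C.X × ℤ →+ C.X × ℤ where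
  toFun a := (g.right • a.1, a.2 - C.pair g.left.toAdd (g.right • a.1))
  map_zero' := by simp
  map_add' a b := by
    ext
    · simp
    · simp only [Prod.fst_add, Prod.snd_add, smul_add, map_add]
      ring

/-- The reflection in the finite Weyl group attached to a root (a junk value off the roots). -/
def rootReflection (C : Ctx) (α : C.X) : C.W :=
  Classical.epsilon fun s =>
    (∀ x : C.X, s • x = x - C.pair (C.coroot α) x • α) ∧
    (∀ y : C.Y, s • y = y - C.pair y α • C.coroot α)

/-- The reflection of `Y ⊗ ℝ` in the zero locus of an affine root, as an element of `W_ext`. -/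
def affineReflection (C : Ctx) (a : C.X × ℤ) : C.Wext :=
  C.t (-(a.2 • C.coroot a.1)) * C.σ (C.rootReflection a.1)

/-- The indicator function of the positive roots. -/
def posIndicator (C : Ctx) (α : C.X) : ℤ := if α ∈ C.pos then 1 else 0

/-- The positive affine roots: those that are positive on the alcove at the origin in the
antidominant chamber. This is the choice for which `len` counts inversions. -/
def IsPosAffine (C : Ctx) (a : C.X × ℤ) : Prop := a.1 ∈ C.roots ∧ C.posIndicator a.1 ≤ a.2

/-- The pairing of the root datum as a bilinear map, with the arguments in the order of
Mathlib's `RootPairing`. -/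
def bilinPairing (C : Ctx) : C.X →ₗ[ℤ] C.Y →ₗ[ℤ] ℤ :=
  LinearMap.mk₂ ℤ (fun x y => C.pair y x) (by simp) (by simp) (by simp) (by simp)

/-- A height function on affine functions, such as a multiple of the evaluation at a point in the
interior of the base alcove. -/
structure IsHeight (C : Ctx) (f : C.X × ℤ →+ ℤ) : Prop where
  pos_of_isPosAffine : ∀ a, C.IsPosAffine a → 0 < f a
  pos_zero_one : 0 < f (0, 1)

/-- The inversions of `g`: the positive affine roots that `g` makes negative, see
`IsRootDatum.mem_inversions`. -/
def inversions (C : Ctx) (g : C.Wext) : Finset (C.X × ℤ) :=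
  (C.roots.sigma fun α => Finset.Ico (C.posIndicator α)
    (C.pair g.left.toAdd (g.right • α) + C.posIndicator (g.right • α))).map
    (Equiv.sigmaEquivProd C.X ℤ).toEmbedding

theorem affineAct_apply (g : C.Wext) (a : C.X × ℤ) :
    C.affineAct g a = (g.right • a.1, a.2 - C.pair g.left.toAdd (g.right • a.1)) := rfl

theorem affineAct_one (a : C.X × ℤ) : C.affineAct 1 a = a := by
  ext <;> simp [affineAct_apply]

theorem affineAct_t (y : C.Y) (a : C.X × ℤ) :
    C.affineAct (C.t y) a = (a.1, a.2 - C.pair y a.1) := by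
  simp [affineAct_apply, t]

theorem affineAct_σ (w : C.W) (a : C.X × ℤ) : C.affineAct (C.σ w) a = (w • a.1, a.2) := by
  simp [affineAct_apply, σ]

theorem affineAct_of_fst_eq_zero (g : C.Wext) {a : C.X × ℤ} (ha : a.1 = 0) :
    C.affineAct g a = a := by
  ext <;> simp [affineAct_apply, ha]

namespace IsRootDatum

theorem affineAct_mul (h : C.IsRootDatum) (g k : C.Wext) (a : C.X × ℤ) :
    C.affineAct (g * k) a = C.affineAct g (C.affineAct k a) := by
  have hleft : (g * k).left.toAdd = g.left.toAdd + g.right • k.left.toAdd := rfl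
  simp only [affineAct_apply, SemidirectProduct.mul_right, hleft, mul_smul, map_add,
    AddMonoidHom.add_apply, h.pair_inv, Prod.mk.injEq, true_and]
  ring

theorem affineAct_faithful (h : C.IsRootDatum) {g k : C.Wext}
    (hgk : ∀ a, C.affineAct g a = C.affineAct k a) : g = k := by
  have hright : g.right = k.right := by
    refine (inv_mul_eq_one.1 (h.faithful_X (k.right⁻¹ * g.right) fun x => ?_)).symm
    have hx : g.right • x = k.right • x := congrArg Prod.fst (hgk (x, 0))
    rw [mul_smul, hx, inv_smul_smul]
  have hleft : C.pair g.left.toAdd = C.pair k.left.toAdd := by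
    ext x
    have hx := congrArg Prod.snd (hgk (g.right⁻¹ • x, 0))
    simpa only [affineAct_apply, ← hright, smul_inv_smul, zero_sub, neg_inj] using hx
  exact SemidirectProduct.ext (Multiplicative.toAdd.injective (h.perfect_left.1 hleft)) hright

theorem rootReflection_smul_X (h : C.IsRootDatum) {α : C.X} (hα : α ∈ C.roots) (x : C.X) :
    C.rootReflection α • x = x - C.pair (C.coroot α) x • α :=
  (Classical.epsilon_spec (h.isReflection α hα)).1 x

theorem rootReflection_smul_Y (h : C.IsRootDatum) {α : C.X} (hα : α ∈ C.roots) (y : C.Y) :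
    C.rootReflection α • y = y - C.pair y α • C.coroot α :=
  (Classical.epsilon_spec (h.isReflection α hα)).2 y

theorem rootReflection_smul_self (h : C.IsRootDatum) {α : C.X} (hα : α ∈ C.roots) :
    C.rootReflection α • α = -α := by
  rw [h.rootReflection_smul_X hα, h.coroot_self α hα, two_smul, sub_add_cancel_left]

theorem neg_mem_roots (h : C.IsRootDatum) {α : C.X} (hα : α ∈ C.roots) : -α ∈ C.roots := by
  rw [← h.rootReflection_smul_self hα]
  exact h.roots_stable _ α hα

theorem coroot_neg (h : C.IsRootDatum) {α : C.X} (hα : α ∈ C.roots) :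
    C.coroot (-α) = -C.coroot α := by
  rw [← h.rootReflection_smul_self hα, ← h.smul_coroot _ α hα, h.rootReflection_smul_Y hα,
    h.coroot_self α hα, two_smul, sub_add_cancel_left]

theorem affineAct_fst_mem_roots (h : C.IsRootDatum) (g : C.Wext) {a : C.X × ℤ}
    (ha : a.1 ∈ C.roots) : (C.affineAct g a).1 ∈ C.roots := h.roots_stable _ _ ha

theorem affineAct_affineReflection (h : C.IsRootDatum) {a : C.X × ℤ} (ha : a.1 ∈ C.roots)
    (c : C.X × ℤ) :
    C.affineAct (C.affineReflection a) c = c - C.pair (C.coroot a.1) c.1 • a := by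
  rw [affineReflection, h.affineAct_mul, affineAct_σ, affineAct_t, h.rootReflection_smul_X ha]
  ext
  · simp
  · simp only [map_neg, map_zsmul, AddMonoidHom.neg_apply, AddMonoidHom.smul_apply, map_sub,
      h.coroot_self _ ha, Prod.snd_sub, Prod.smul_snd, smul_eq_mul]
    ring

theorem affineAct_affineReflection_self (h : C.IsRootDatum) {a : C.X × ℤ} (ha : a.1 ∈ C.roots) :
    C.affineAct (C.affineReflection a) a = -a := by
  rw [h.affineAct_affineReflection ha, h.coroot_self _ ha, two_smul, sub_add_cancel_left]

theorem affineReflection_affineAct_mul (h : C.IsRootDatum) (g : C.Wext) {a : C.X × ℤ}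
    (ha : a.1 ∈ C.roots) :
    C.affineReflection (C.affineAct g a) * g = g * C.affineReflection a := by
  refine h.affineAct_faithful fun c => ?_
  have hpair : C.pair (C.coroot (C.affineAct g a).1) (C.affineAct g c).1 =
      C.pair (C.coroot a.1) c.1 := by
    simp only [affineAct_apply, ← h.smul_coroot _ _ ha, h.pair_inv]
  rw [h.affineAct_mul, h.affineAct_mul, h.affineAct_affineReflection ha,
    h.affineAct_affineReflection (h.affineAct_fst_mem_roots g ha), map_sub, map_zsmul, hpair]

theorem affineReflection_neg (h : C.IsRootDatum) {a : C.X × ℤ} (ha : a.1 ∈ C.roots) :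
    C.affineReflection (-a) = C.affineReflection a := by
  refine h.affineAct_faithful fun c => ?_
  rw [h.affineAct_affineReflection ha, h.affineAct_affineReflection (h.neg_mem_roots ha),
    Prod.fst_neg, h.coroot_neg ha, map_neg, AddMonoidHom.neg_apply, neg_smul_neg]

theorem affineReflection_mul_self (h : C.IsRootDatum) {a : C.X × ℤ} (ha : a.1 ∈ C.roots) :
    C.affineReflection a * C.affineReflection a = 1 := by
  refine h.affineAct_faithful fun c => ?_
  rw [h.affineAct_mul, h.affineAct_affineReflection ha c, map_sub, map_zsmul,
    h.affineAct_affineReflection_self ha, h.affineAct_affineReflection ha, affineAct_one,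
    smul_neg, sub_neg_eq_add, sub_add_cancel]

theorem isAddTorsionFree_X (h : C.IsRootDatum) : IsAddTorsionFree C.X := by
  have := h.free_X
  exact .of_isTorsionFree ℤ C.X

theorem eq_or_eq_neg_of_eq_zsmul (h : C.IsRootDatum) {a b : C.X × ℤ} {k : ℤ}
    (ha : a.1 ∈ C.roots) (hb : b.1 ∈ C.roots) (hab : a = k • b) : a = b ∨ a = -b := by
  subst hab
  rcases h.reduced b.1 hb k ha with rfl | rfl
  · exact Or.inl (one_smul ℤ b)
  · exact Or.inr (neg_one_smul ℤ b)

theorem eq_or_eq_neg_of_affineReflection_eq (h : C.IsRootDatum) {a b : C.X × ℤ}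
    (ha : a.1 ∈ C.roots) (hb : b.1 ∈ C.roots)
    (hab : C.affineReflection a = C.affineReflection b) : a = b ∨ a = -b := by
  have := h.isAddTorsionFree_X
  have hsmul (c : C.X × ℤ) : C.pair (C.coroot a.1) c.1 • a = C.pair (C.coroot b.1) c.1 • b := by
    rw [← sub_right_inj (a := c), ← h.affineAct_affineReflection ha, hab,
      h.affineAct_affineReflection hb]
  have ha_smul := hsmul a
  have hb_smul := hsmul b
  rw [h.coroot_self _ ha] at ha_smul
  rw [h.coroot_self _ hb] at hb_smul
  have hmul : C.pair (C.coroot b.1) a.1 * C.pair (C.coroot a.1) b.1 = 2 * 2 := by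
    have := congrArg (fun c : C.X × ℤ => C.pair (C.coroot a.1) c.1) ha_smul
    simpa only [Prod.smul_fst, map_zsmul, smul_eq_mul, h.coroot_self _ ha] using this.symm
  have heven : Even (C.pair (C.coroot b.1) a.1 * C.pair (C.coroot a.1) b.1) := by
    rw [hmul]
    exact even_two_mul 2
  rcases Int.even_mul.1 heven with heven | heven <;> obtain ⟨k, hk⟩ := heven.exists_two_nsmul
  · rw [hk, two_nsmul, ← two_mul, mul_smul] at ha_smul
    exact h.eq_or_eq_neg_of_eq_zsmul ha hb (zsmul_right_injective two_ne_zero ha_smul)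
  · rw [hk, two_nsmul, ← two_mul, mul_smul] at hb_smul
    rw [eq_comm, ← neg_eq_iff_eq_neg, eq_comm (a := -a)]
    exact h.eq_or_eq_neg_of_eq_zsmul hb ha (zsmul_right_injective two_ne_zero hb_smul.symm)

theorem posIndicator_neg (h : C.IsRootDatum) {α : C.X} (hα : α ∈ C.roots) :
    C.posIndicator (-α) = 1 - C.posIndicator α := by
  by_cases hpos : α ∈ C.pos
  · simp [posIndicator, hpos, h.pos_neg_disjoint α hpos]
  · simp [posIndicator, hpos, (h.root_decomp α hα).resolve_left hpos]

theorem isPosAffine_neg (h : C.IsRootDatum) {a : C.X × ℤ} (ha : a.1 ∈ C.roots) :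
    C.IsPosAffine (-a) ↔ ¬ C.IsPosAffine a := by
  have hneg := h.posIndicator_neg ha
  simp only [IsPosAffine, ha, h.neg_mem_roots ha, Prod.fst_neg, Prod.snd_neg, true_and]
  omega

/-! ### Differences of roots -/

theorem isPerfPair_bilinPairing (h : C.IsRootDatum) : C.bilinPairing.IsPerfPair where
  bijective_left := (addMonoidHomLequivInt ℤ).bijective.comp h.perfect_right
  bijective_right := (addMonoidHomLequivInt ℤ).bijective.comp h.perfect_left

theorem mapsTo_preReflection_roots (h : C.IsRootDatum) {α : C.X} (hα : α ∈ C.roots) :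
    Set.MapsTo (Module.preReflection α (C.bilinPairing.flip (C.coroot α))) C.roots C.roots := by
  intro β hβ
  have hmem := h.roots_stable (C.rootReflection α) β hβ
  rwa [h.rootReflection_smul_X hα] at hmem

theorem mapsTo_preReflection_coroots (h : C.IsRootDatum) {α : C.X} (hα : α ∈ C.roots) :
    Set.MapsTo (Module.preReflection (C.coroot α) (C.bilinPairing α))
      (C.coroot '' C.roots) (C.coroot '' C.roots) := by
  rintro _ ⟨β, hβ, rfl⟩
  refine ⟨C.rootReflection α • β, h.roots_stable _ β hβ, ?_⟩
  rw [← h.smul_coroot _ β hβ, h.rootReflection_smul_Y hα]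
  rfl

theorem coroot_injOn (h : C.IsRootDatum) : Set.InjOn C.coroot C.roots := by
  intro α hα β hβ hαβ
  have := h.isAddTorsionFree_X
  refine Module.eq_of_mapsTo_reflection_of_mem C.roots.finite_toSet
    (f := C.bilinPairing.flip (C.coroot α)) (g := C.bilinPairing.flip (C.coroot β))
    (h.coroot_self α hα) (h.coroot_self β hβ) ?_ ?_
    (h.mapsTo_preReflection_roots hα) (h.mapsTo_preReflection_roots hβ) hβ
  · exact (congrArg (C.pair · α) hαβ).symm.trans (h.coroot_self α hα)
  · exact (congrArg (C.pair · β) hαβ).trans (h.coroot_self β hβ)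

/-- The root datum as one of Mathlib's root pairings, indexed by the roots. -/
def rootPairing (h : C.IsRootDatum) : RootPairing C.roots ℤ C.X C.Y :=
  have := h.free_X
  have := h.isPerfPair_bilinPairing
  RootPairing.mk' C.bilinPairing (Function.Embedding.subtype _)
    ⟨fun α => C.coroot α, h.coroot_injOn.injective⟩
    (fun α => h.coroot_self α α.2)
    (fun α => by
      have hmaps := h.mapsTo_preReflection_roots α.2
      rwa [← Subtype.range_coe (s := (C.roots : Set C.X))] at hmaps)
    (fun α => by
      have hmaps := h.mapsTo_preReflection_coroots α.2
      rwa [Set.image_eq_range] at hmaps)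

theorem sub_mem_insert_zero_roots (h : C.IsRootDatum) {α β : C.X} (hα : α ∈ C.roots)
    (hβ : β ∈ C.roots) (hpos : 0 < C.pair (C.coroot β) α) : α - β ∈ insert 0 C.roots := by
  rcases eq_or_ne α β with rfl | hαβ
  · simp
  have : h.rootPairing.IsCrystallographic := ⟨fun i j => ⟨_, rfl⟩⟩
  have hpairing : h.rootPairing.pairingIn ℤ ⟨α, hα⟩ ⟨β, hβ⟩ = C.pair (C.coroot β) α :=
    h.rootPairing.algebraMap_pairingIn ℤ _ _
  obtain ⟨γ, hγ⟩ := h.rootPairing.root_sub_root_mem_of_pairingIn_pos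
    (hpairing ▸ hpos) (Subtype.coe_ne_coe.1 hαβ)
  exact Finset.mem_insert_of_mem (hγ ▸ γ.2)

/-! ### Heights and inversions -/

theorem exists_isHeight (h : C.IsRootDatum) : ∃ f, C.IsHeight f := by
  obtain ⟨η, hη⟩ := h.exists_regular_Y
  let N : ℤ := 1 + ∑ α ∈ C.pos, C.pair η α
  have hlt : ∀ α ∈ C.pos, C.pair η α < N := by
    intro α hα
    have := Finset.single_le_sum (f := fun α => C.pair η α) (fun β hβ => (hη β hβ).le) hα
    linarith
  have hN_pos : 0 < N := by
    have := Finset.sum_nonneg fun α hα => (hη α hα).le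
    linarith
  refine ⟨N • AddMonoidHom.snd C.X ℤ - (C.pair η).comp (AddMonoidHom.fst C.X ℤ), ?_, ?_⟩
  · rintro ⟨α, n⟩ ⟨hα, hn⟩
    suffices C.pair η α < N * n by simpa
    by_cases hpos : α ∈ C.pos
    · have := hlt α hpos
      simp only [posIndicator, hpos, if_true] at hn
      nlinarith
    · have := hη (-α) ((h.root_decomp α hα).resolve_left hpos)
      rw [map_neg] at this
      simp only [posIndicator, hpos, if_false] at hn
      nlinarith
  · simpa

theorem affineAct_fst_mem_insert_zero_roots (h : C.IsRootDatum) (g : C.Wext) {a : C.X × ℤ}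
    (ha : a.1 ∈ insert 0 C.roots) : (C.affineAct g a).1 ∈ insert 0 C.roots := by
  rcases Finset.mem_insert.1 ha with ha | ha
  · rwa [affineAct_of_fst_eq_zero g ha, Finset.mem_insert, or_iff_left_of_imp (by simp_all)]
  · exact Finset.mem_insert_of_mem (h.affineAct_fst_mem_roots g ha)

theorem neg_mem_insert_zero_roots (h : C.IsRootDatum) {α : C.X}
    (hα : α ∈ insert 0 C.roots) : -α ∈ insert 0 C.roots := by
  rcases Finset.mem_insert.1 hα with rfl | hα
  · simp
  · exact Finset.mem_insert_of_mem (h.neg_mem_roots hα)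

theorem pair_coroot_pos_of_affineAct_neg (h : C.IsRootDatum) {f : C.X × ℤ →+ ℤ}
    {b c : C.X × ℤ} (hb : b.1 ∈ C.roots) (hfb : 0 < f b) (hfc : 0 < f c)
    (hrefl : f (C.affineAct (C.affineReflection b) c) < 0) :
    0 < C.pair (C.coroot b.1) c.1 := by
  rw [h.affineAct_affineReflection hb, map_sub, map_zsmul, smul_eq_mul] at hrefl
  by_contra! hle
  nlinarith

end IsRootDatum

namespace IsHeight

variable {f : C.X × ℤ →+ ℤ} {a b c : C.X × ℤ}

theorem neg_of_not_isPosAffine (hf : C.IsHeight f) (h : C.IsRootDatum) (ha : a.1 ∈ C.roots)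
    (hneg : ¬ C.IsPosAffine a) : f a < 0 := by
  have := hf.pos_of_isPosAffine (-a) ((h.isPosAffine_neg ha).2 hneg)
  rwa [map_neg, neg_pos] at this

theorem pos_iff (hf : C.IsHeight f) (h : C.IsRootDatum) (ha : a.1 ∈ C.roots) :
    0 < f a ↔ C.IsPosAffine a :=
  ⟨fun hpos => by_contra fun hneg => hpos.not_gt (hf.neg_of_not_isPosAffine h ha hneg),
    hf.pos_of_isPosAffine a⟩

theorem ne_zero (hf : C.IsHeight f) (h : C.IsRootDatum) (ha : a.1 ∈ insert 0 C.roots)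
    (ha_ne : a ≠ 0) : f a ≠ 0 := by
  rcases Finset.mem_insert.1 ha with ha | ha
  · have ha_eq : a = a.2 • (0, 1) := by ext <;> simp [ha]
    rw [ha_eq, map_zsmul]
    refine smul_ne_zero (fun h0 => ha_ne (Prod.ext ha h0)) hf.pos_zero_one.ne'
  · by_cases hpos : C.IsPosAffine a
    · exact (hf.pos_of_isPosAffine a hpos).ne'
    · exact (hf.neg_of_not_isPosAffine h ha hpos).ne

theorem exists_add_eq_or_sub (hf : C.IsHeight f) (h : C.IsRootDatum) (hb : b.1 ∈ C.roots)
    (hc : c.1 ∈ C.roots) (hfb : 0 < f b) (hfc : 0 < f c) (hcb : c ≠ b)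
    (hrefl : f (C.affineAct (C.affineReflection b) c) < 0) :
    (∃ u v : C.X × ℤ, u.1 ∈ insert 0 C.roots ∧ v.1 ∈ insert 0 C.roots ∧
      0 < f u ∧ 0 < f v ∧ u + v = b) ∨
    ((c - b).1 ∈ C.roots ∧ 0 < f (c - b) ∧
      f (C.affineAct (C.affineReflection b) (c - b)) < 0) := by
  set r := C.affineAct (C.affineReflection b) with hr
  have hd : (c - b).1 ∈ insert 0 C.roots :=
    h.sub_mem_insert_zero_roots hc hb (h.pair_coroot_pos_of_affineAct_neg hb hfb hfc hrefl)
  have hrd : (r (c - b)).1 ∈ insert 0 C.roots := h.affineAct_fst_mem_insert_zero_roots _ hd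
  have hrd_eq : r (c - b) = r c + b := by
    rw [map_sub, hr, h.affineAct_affineReflection_self hb, sub_neg_eq_add]
  rcases lt_or_gt_of_ne (hf.ne_zero h hd (sub_ne_zero.2 hcb)) with hfd | hfd
  · refine Or.inl ⟨c, b - c, Finset.mem_insert_of_mem hc, ?_, hfc, ?_, add_sub_cancel c b⟩
    · simpa using h.neg_mem_insert_zero_roots hd
    · rwa [← neg_sub, map_neg, neg_pos]
  rcases lt_or_ge 0 (f (r (c - b))) with hfrd | hfrd
  · refine Or.inl ⟨-r c, r (c - b), h.neg_mem_insert_zero_roots ?_, hrd, ?_, hfrd, ?_⟩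
    · exact Finset.mem_insert_of_mem (h.affineAct_fst_mem_roots _ hc)
    · rwa [map_neg, neg_pos]
    · rw [hrd_eq, neg_add_cancel_left]
  · have hd_ne : (c - b).1 ≠ 0 := by
      intro h0
      rw [hr, affineAct_of_fst_eq_zero _ h0] at hfrd
      exact hfrd.not_gt hfd
    have hd_root := (Finset.mem_insert.1 hd).resolve_left hd_ne
    have hrd_ne : r (c - b) ≠ 0 := fun h0 =>
      ne_of_mem_of_not_mem (h.affineAct_fst_mem_roots _ hd_root) h.zero_not_root
        (congrArg Prod.fst h0)
    exact Or.inr ⟨hd_root, hfd, hfrd.lt_of_ne (hf.ne_zero h hrd hrd_ne)⟩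

theorem exists_add_eq (hf : C.IsHeight f) (h : C.IsRootDatum) (hb : b.1 ∈ C.roots)
    (hc : c.1 ∈ C.roots) (hfb : 0 < f b) (hfc : 0 < f c) (hcb : c ≠ b)
    (hrefl : f (C.affineAct (C.affineReflection b) c) < 0) :
    ∃ u v : C.X × ℤ, u.1 ∈ insert 0 C.roots ∧ v.1 ∈ insert 0 C.roots ∧
      0 < f u ∧ 0 < f v ∧ u + v = b := by
  induction hn : (f c).toNat using Nat.strong_induction_on generalizing c with
  | _ n ih =>
    rcases hf.exists_add_eq_or_sub h hb hc hfb hfc hcb hrefl with hadd | ⟨hd, hfd, hfrd⟩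
    · exact hadd
    have hdb : c - b ≠ b := by
      intro hdb
      have hc_eq : c.1 = (2 : ℤ) • b.1 := by
        rw [sub_eq_iff_eq_add.1 hdb, Prod.fst_add, two_smul]
      have := h.reduced b.1 hb 2 (hc_eq ▸ hc)
      omega
    refine ih _ ?_ hd hfd hdb hfrd rfl
    rw [map_sub] at hfd ⊢
    omega

end IsHeight

namespace IsRootDatum

theorem mem_inversions (h : C.IsRootDatum) {g : C.Wext} {a : C.X × ℤ} :
    a ∈ C.inversions g ↔ C.IsPosAffine a ∧ ¬ C.IsPosAffine (C.affineAct g a) := by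
  obtain ⟨α, n⟩ := a
  have hg : α ∈ C.roots → g.right • α ∈ C.roots := h.roots_stable _ _
  simp only [inversions, IsPosAffine, affineAct_apply, Finset.mem_map_equiv,
    Equiv.sigmaEquivProd, Equiv.coe_fn_symm_mk, Finset.mem_sigma, Finset.mem_Ico]
  by_cases hα : α ∈ C.roots
  · simp only [hα, hg hα, true_and, not_le, and_congr_right_iff]
    omega
  · simp [hα]

theorem fst_mem_roots_of_mem_inversions (h : C.IsRootDatum) {g : C.Wext} {a : C.X × ℤ}
    (ha : a ∈ C.inversions g) : a.1 ∈ C.roots := (h.mem_inversions.1 ha).1.1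

theorem self_mem_inversions_affineReflection (h : C.IsRootDatum) {a : C.X × ℤ}
    (ha : C.IsPosAffine a) : a ∈ C.inversions (C.affineReflection a) := by
  rw [h.mem_inversions, h.affineAct_affineReflection_self ha.1, h.isPosAffine_neg ha.1, not_not]
  exact ⟨ha, ha⟩

theorem exists_inversions_affineReflection_eq_singleton (h : C.IsRootDatum) {g : C.Wext}
    (hg : (C.inversions g).Nonempty) :
    ∃ b ∈ C.inversions g, C.inversions (C.affineReflection b) = {b} := by
  obtain ⟨f, hf⟩ := h.exists_isHeight
  obtain ⟨b, hbg, hmin⟩ := (C.inversions g).exists_min_image f hg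
  obtain ⟨hb, hgb⟩ := h.mem_inversions.1 hbg
  have hpos_of_lt : ∀ u : C.X × ℤ, u.1 ∈ insert 0 C.roots → 0 < f u → f u < f b →
      0 < f (C.affineAct g u) := by
    intro u hu hfu hlt
    rcases Finset.mem_insert.1 hu with hu | hu
    · rwa [affineAct_of_fst_eq_zero g hu]
    · refine hf.pos_of_isPosAffine _ (by_contra fun hneg => hlt.not_ge (hmin u ?_))
      exact h.mem_inversions.2 ⟨(hf.pos_iff h hu).1 hfu, hneg⟩
  refine ⟨b, hbg, Finset.eq_singleton_iff_unique_mem.2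
    ⟨h.self_mem_inversions_affineReflection hb, fun c hc => by_contra fun hcb => ?_⟩⟩
  obtain ⟨hc, hrc⟩ := h.mem_inversions.1 hc
  obtain ⟨u, v, hu, hv, hfu, hfv, rfl⟩ := hf.exists_add_eq h hb.1 hc.1
    (hf.pos_of_isPosAffine b hb) (hf.pos_of_isPosAffine c hc) hcb
    (hf.neg_of_not_isPosAffine h (h.affineAct_fst_mem_roots _ hc.1) hrc)
  have hgu := hpos_of_lt u hu hfu (by rw [map_add]; omega)
  have hgv := hpos_of_lt v hv hfv (by rw [map_add]; omega)
  have hguv := hf.neg_of_not_isPosAffine h (h.affineAct_fst_mem_roots g hb.1) hgb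
  rw [map_add, map_add] at hguv
  omega

theorem affineReflection_mem_image_inversions (h : C.IsRootDatum) {g : C.Wext} {a : C.X × ℤ}
    (ha : a.1 ∈ C.roots) :
    C.affineReflection a ∈ (C.inversions g).image C.affineReflection ↔
      (C.IsPosAffine a ↔ ¬ C.IsPosAffine (C.affineAct g a)) := by
  have hneg := h.isPosAffine_neg ha
  have hgneg := h.isPosAffine_neg (h.affineAct_fst_mem_roots g ha)
  rw [← map_neg] at hgneg
  rw [Finset.mem_image]
  constructor
  · rintro ⟨b, hb, hba⟩
    have hb_root := h.fst_mem_roots_of_mem_inversions hb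
    rw [h.mem_inversions] at hb
    rcases h.eq_or_eq_neg_of_affineReflection_eq hb_root ha hba with rfl | rfl <;> tauto
  · intro hiff
    by_cases hpos : C.IsPosAffine a
    · exact ⟨a, h.mem_inversions.2 ⟨hpos, hiff.1 hpos⟩, rfl⟩
    · exact ⟨-a, h.mem_inversions.2 (by tauto), h.affineReflection_neg ha⟩

/-- The reflection cocycle of `W_ext`: the reflections are the affine ones, and `g` inverts the
reflections in those affine hyperplanes whose positive root it makes negative. -/
def affineCocycle (h : C.IsRootDatum) : ReflectionCocycle C.Wext where
  refls := C.affineReflection '' {a | a.1 ∈ C.roots}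
  inv g := (C.inversions g).image C.affineReflection
  mul_self := by
    rintro _ ⟨a, ha, rfl⟩
    exact h.affineReflection_mul_self ha
  conj_mem := by
    rintro g _ ⟨a, ha, rfl⟩
    rw [← h.affineReflection_affineAct_mul g ha, mul_inv_cancel_right]
    exact ⟨_, h.affineAct_fst_mem_roots g ha, rfl⟩
  inv_subset := by
    intro g t ht
    obtain ⟨a, ha, rfl⟩ := Finset.mem_image.1 ht
    exact ⟨a, h.fst_mem_roots_of_mem_inversions ha, rfl⟩
  self_mem_inv := by
    rintro _ ⟨a, ha, rfl⟩
    rw [h.affineReflection_mem_image_inversions ha, h.affineAct_affineReflection_self ha,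
      h.isPosAffine_neg ha, not_not]
  mem_inv_mul := by
    rintro g k _ ⟨a, ha, rfl⟩
    have hka := h.affineAct_fst_mem_roots k ha
    rw [← h.affineReflection_affineAct_mul k ha, mul_inv_cancel_right,
      h.affineReflection_mem_image_inversions ha, h.affineReflection_mem_image_inversions ha,
      h.affineReflection_mem_image_inversions hka, h.affineAct_mul]
    tauto
  exists_simple := by
    intro g hg
    obtain ⟨b, hb, hb_simple⟩ :=
      h.exists_inversions_affineReflection_eq_singleton (Finset.image_nonempty.1 hg)
    exact ⟨_, Finset.mem_image_of_mem _ hb, by rw [hb_simple, Finset.image_singleton]⟩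

/-! ### The length function -/

theorem sum_roots_eq_sum_pos (h : C.IsRootDatum) {M : Type*} [AddCommMonoid M] (F : C.X → M) :
    ∑ α ∈ C.roots, F α = ∑ α ∈ C.pos, (F α + F (-α)) := by
  have hroots : C.roots = C.pos ∪ C.pos.map (Equiv.neg C.X).toEmbedding := by
    ext α
    rw [Finset.mem_union, Finset.mem_map_equiv, Equiv.neg_symm, Equiv.neg_apply]
    refine ⟨h.root_decomp α, ?_⟩
    rintro (hα | hα)
    · exact h.pos_subset hα
    · simpa using h.neg_mem_roots (h.pos_subset hα)
  have hdisj : Disjoint C.pos (C.pos.map (Equiv.neg C.X).toEmbedding) := by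
    rw [Finset.disjoint_left]
    intro α hα
    rw [Finset.mem_map_equiv, Equiv.neg_symm, Equiv.neg_apply]
    exact h.pos_neg_disjoint α hα
  rw [hroots, Finset.sum_union hdisj, Finset.sum_map, Finset.sum_add_distrib]
  rfl

theorem len_eq_sum_natAbs (h : C.IsRootDatum) (g : C.Wext) :
    C.len g = ∑ α ∈ C.pos,
      (C.pair g.left.toAdd (g.right • α) + C.posIndicator (g.right • α) - 1).natAbs := by
  refine Finset.sum_congr rfl fun α _ => ?_
  rw [← h.pair_inv g.right, smul_inv_smul, posIndicator]
  split_ifs <;> omega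

theorem card_inversions (h : C.IsRootDatum) (g : C.Wext) :
    (C.inversions g).card = C.len g := by
  rw [h.len_eq_sum_natAbs, inversions, Finset.card_map, Finset.card_sigma,
    h.sum_roots_eq_sum_pos]
  refine Finset.sum_congr rfl fun α hα => ?_
  have hα_root := h.pos_subset hα
  have hα_pos : C.posIndicator α = 1 := if_pos hα
  rw [smul_neg, h.posIndicator_neg hα_root, map_neg,
    h.posIndicator_neg (h.roots_stable g.right α hα_root), Int.card_Ico, Int.card_Ico, hα_pos]
  omega

theorem affineCocycle_length (h : C.IsRootDatum) (g : C.Wext) :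
    h.affineCocycle.length g = C.len g := by
  rw [← h.card_inversions]
  refine Finset.card_image_of_injOn fun a ha b hb hab => ?_
  have ha_root := h.fst_mem_roots_of_mem_inversions ha
  have hb_root := h.fst_mem_roots_of_mem_inversions hb
  refine (h.eq_or_eq_neg_of_affineReflection_eq ha_root hb_root hab).resolve_right ?_
  rintro rfl
  exact (h.isPosAffine_neg hb_root).1 (h.mem_inversions.1 ha).1 (h.mem_inversions.1 hb).1

end IsRootDatum

/-! ### The affine Weyl group and its Bruhat order -/

theorem t_add (y z : C.Y) : C.t (y + z) = C.t y * C.t z := by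
  rw [t, ofAdd_add, map_mul, t, t]

theorem affineReflection_zero (α : C.X) :
    C.affineReflection (α, 0) = C.σ (C.rootReflection α) := by
  simp [affineReflection, t]

namespace IsRootDatum

theorem t_coroot (h : C.IsRootDatum) {α : C.X} (hα : α ∈ C.roots) :
    C.t (C.coroot α) = C.affineReflection (α, -1) * C.affineReflection (α, 0) := by
  have hsq := h.affineReflection_mul_self (a := (α, 0)) hα
  rw [affineReflection_zero] at hsq ⊢
  rw [affineReflection, neg_one_smul, neg_neg, mul_assoc, hsq, mul_one]

theorem eq_rootReflection (h : C.IsRootDatum) {α : C.X} (hα : α ∈ C.roots) {s : C.W}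
    (hs : ∀ x : C.X, s • x = x - C.pair (C.coroot α) x • α) : s = C.rootReflection α := by
  refine (inv_mul_eq_one.1 (h.faithful_X _ fun x => ?_)).symm
  rw [mul_smul, hs, ← h.rootReflection_smul_X hα, inv_smul_smul]

theorem t_mem_closure (h : C.IsRootDatum) {y : C.Y} (hy : y ∈ C.corootLattice) :
    C.t y ∈ Subgroup.closure h.affineCocycle.refls := by
  induction hy using AddSubgroup.closure_induction with
  | mem y hy =>
    obtain ⟨α, hα, rfl⟩ := hy
    rw [h.t_coroot hα]
    exact mul_mem (Subgroup.subset_closure ⟨_, hα, rfl⟩) (Subgroup.subset_closure ⟨_, hα, rfl⟩)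
  | zero => simp [t]
  | add y z _ _ hy hz => exact t_add y z ▸ mul_mem hy hz
  | neg y _ hy => simpa [t] using inv_mem hy

theorem σ_mem_closure (h : C.IsRootDatum) (w : C.W) :
    C.σ w ∈ Subgroup.closure h.affineCocycle.refls := by
  suffices hle : (⊤ : Subgroup C.W) ≤
      (Subgroup.closure h.affineCocycle.refls).comap SemidirectProduct.inr from hle trivial
  rw [← (Subgroup.eq_top_iff' _).2 h.weyl_gen, Subgroup.closure_le]
  rintro s ⟨α, hα, hs, -⟩
  refine Subgroup.subset_closure ⟨(α, 0), hα, ?_⟩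
  rw [affineReflection_zero, ← h.eq_rootReflection hα hs, σ]

theorem Waff_eq_closure_refls (h : C.IsRootDatum) :
    C.Waff = Subgroup.closure h.affineCocycle.refls := by
  refine le_antisymm ((Subgroup.closure_le _).2 ?_) ((Subgroup.closure_le _).2 ?_)
  · rintro _ (⟨y, hy, rfl⟩ | ⟨w, rfl⟩)
    · exact h.t_mem_closure hy
    · exact h.σ_mem_closure w
  · rintro _ ⟨a, ha, rfl⟩
    refine mul_mem (Subgroup.subset_closure (Or.inl ⟨_, ?_, rfl⟩))
      (Subgroup.subset_closure (Or.inr ⟨_, rfl⟩))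
    have hcoroot : C.coroot a.1 ∈ C.corootLattice := AddSubgroup.subset_closure ⟨a.1, ha, rfl⟩
    exact neg_mem (zsmul_mem hcoroot a.2)

theorem mem_Saff_iff_isSimple (h : C.IsRootDatum) {s : C.Wext} :
    s ∈ C.Saff ↔ h.affineCocycle.IsSimple s := by
  rw [ReflectionCocycle.isSimple_iff_mem_closure_and_length, ← h.Waff_eq_closure_refls,
    h.affineCocycle_length]
  rfl

theorem bruhat_iff_bruhatLE (h : C.IsRootDatum) {x y : C.Wext} :
    C.bruhat x y ↔ h.affineCocycle.BruhatLE x y := by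
  constructor
  · rintro ⟨ω, u, _, hω, -, -, rfl, rfl, l, hl, rfl, hlen, hsub⟩
    rw [← h.affineCocycle_length] at hlen
    rw [ReflectionCocycle.bruhatLE_mul_left_iff_of_length_eq_zero
      ((h.affineCocycle_length ω).trans hω)]
    exact (ReflectionCocycle.bruhatLE_prod_iff_exists_sublist
      (fun s hs => h.mem_Saff_iff_isSimple.1 (hl s hs)) hlen).2 hsub
  · intro hxy
    obtain ⟨ω, l, hω, hl, hlen, rfl⟩ := h.affineCocycle.exists_eq_mul_prod y
    rw [← mul_inv_cancel_left ω x,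
      ReflectionCocycle.bruhatLE_mul_left_iff_of_length_eq_zero hω,
      ReflectionCocycle.bruhatLE_prod_iff_exists_sublist hl hlen] at hxy
    obtain ⟨l', hsub, hprod⟩ := hxy
    have hu : ω⁻¹ * x ∈ C.Waff := by
      rw [← hprod, h.Waff_eq_closure_refls]
      exact ReflectionCocycle.prod_mem_closure_refls fun s hs => hl s (hsub.subset hs)
    have hv : l.prod ∈ C.Waff := by
      rw [h.Waff_eq_closure_refls]
      exact ReflectionCocycle.prod_mem_closure_refls hl
    rw [h.affineCocycle_length] at hω hlen
    exact ⟨ω, ω⁻¹ * x, l.prod, hω, hu, hv, (mul_inv_cancel_left ω x).symm, rfl, l,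
      fun s hs => h.mem_Saff_iff_isSimple.2 (hl s hs), rfl, hlen, l', hsub, hprod⟩

/-! ### Dominant translations -/

theorem sum_pos_smul (h : C.IsRootDatum) (w : C.W) {F : C.X → ℕ} (hF : ∀ x, F (-x) = F x) :
    ∑ α ∈ C.pos, F (w • α) = ∑ α ∈ C.pos, F α := by
  have hsum (G : C.X → ℕ) (hG : ∀ x, G (-x) = G x) :
      ∑ α ∈ C.roots, G α = 2 * ∑ α ∈ C.pos, G α := by
    simp only [h.sum_roots_eq_sum_pos, hG, ← two_mul, Finset.mul_sum]
  have hperm : ∑ α ∈ C.roots, F (w • α) = ∑ α ∈ C.roots, F α :=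
    Finset.sum_nbij' (w • ·) (w⁻¹ • ·) (h.roots_stable w) (h.roots_stable w⁻¹)
      (fun α _ => inv_smul_smul w α) (fun α _ => smul_inv_smul w α) (fun _ _ => rfl)
  rw [hsum F hF, hsum _ fun x => by rw [smul_neg, hF]] at hperm
  omega

theorem len_t (h : C.IsRootDatum) (y : C.Y) :
    C.len (C.t y) = ∑ α ∈ C.pos, (C.pair y α).natAbs := by
  rw [h.len_eq_sum_natAbs]
  exact Finset.sum_congr rfl fun α hα => by simp [t, posIndicator, hα]

theorem mem_WextPlus_of_left_mem_Ypos (h : C.IsRootDatum) {g : C.Wext}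
    (hg : g.left.toAdd ∈ C.Ypos) : g ∈ C.WextPlus := by
  intro μ hμ
  have hleft : (C.t μ * g).left.toAdd = μ + g.left.toAdd := by simp [t]
  have hright : (C.t μ * g).right = g.right := by simp [t]
  rw [h.len_t, ← h.sum_pos_smul g.right (F := fun α => (C.pair μ α).natAbs) (by simp),
    h.len_eq_sum_natAbs, h.len_eq_sum_natAbs, ← Finset.sum_add_distrib, hleft, hright]
  refine Finset.sum_congr rfl fun α hα => ?_
  rw [map_add, AddMonoidHom.add_apply]
  by_cases hpos : g.right • α ∈ C.pos
  · have hμ_nonneg := hμ _ hpos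
    have hg_nonneg := hg _ hpos
    simp only [posIndicator, hpos, if_true]
    omega
  · have hneg := (h.root_decomp _ (h.roots_stable _ α (h.pos_subset hα))).resolve_left hpos
    have hμ_nonneg := hμ _ hneg
    have hg_nonneg := hg _ hneg
    rw [map_neg] at hμ_nonneg hg_nonneg
    simp only [posIndicator, hpos, if_false]
    omega

theorem exists_forall_add_mem_Ypos (h : C.IsRootDatum) (s : Finset C.Y) :
    ∃ ν, ∀ y ∈ s, ν + y ∈ C.Ypos := by
  obtain ⟨η, hη⟩ := h.exists_regular_Y
  refine ⟨(∑ y ∈ s, ∑ α ∈ C.pos, |C.pair y α|) • η, fun y hy α hα => ?_⟩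
  have hbound : |C.pair y α| ≤ ∑ y ∈ s, ∑ α ∈ C.pos, |C.pair y α| :=
    (Finset.single_le_sum (f := fun α => |C.pair y α|) (fun _ _ => abs_nonneg _) hα).trans
      (Finset.single_le_sum (f := fun y => ∑ α ∈ C.pos, |C.pair y α|)
        (fun _ _ => Finset.sum_nonneg fun _ _ => abs_nonneg _) hy)
  rw [map_add, map_zsmul, AddMonoidHom.add_apply, AddMonoidHom.smul_apply, smul_eq_mul]
  nlinarith [hη α hα, neg_abs_le (C.pair y α), abs_nonneg (C.pair y α)]

theorem bruhat_t_mul_iff (h : C.IsRootDatum) {μ ν : C.Y} {w y : C.Wext}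
    (hw : C.t μ * w ∈ C.WextPlus) (hy : C.t μ * y ∈ C.WextPlus) (hμν : ν - μ ∈ C.Ypos) :
    C.bruhat (C.t ν * w) (C.t ν * y) ↔ C.bruhat (C.t μ * w) (C.t μ * y) := by
  have ht : C.t ν = C.t (ν - μ) * C.t μ := by rw [← t_add, sub_add_cancel]
  rw [ht, mul_assoc, mul_assoc, h.bruhat_iff_bruhatLE, h.bruhat_iff_bruhatLE,
    ReflectionCocycle.bruhatLE_mul_left_iff] <;> simp only [h.affineCocycle_length]
  · exact hw _ hμν
  · exact hy _ hμν

end IsRootDatum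

end SemiInf.Ctx

/-- For `w, y ∈ W_ext`: there exists `μ` with `t_μ w, t_μ y ∈ W_ext⁺` and
`t_μ w ≤ t_μ y` iff for all such `μ` one has `t_μ w ≤ t_μ y`. -/
theorem statement8 (C : SemiInf.Ctx) (h : C.IsRootDatum) (w y : C.Wext) :
    (∃ μ : C.Y, C.t μ * w ∈ C.WextPlus ∧ C.t μ * y ∈ C.WextPlus ∧
      C.bruhat (C.t μ * w) (C.t μ * y)) ↔
    (∀ μ : C.Y, C.t μ * w ∈ C.WextPlus → C.t μ * y ∈ C.WextPlus →
      C.bruhat (C.t μ * w) (C.t μ * y)) := by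
  constructor
  · rintro ⟨μ₀, hw₀, hy₀, hle⟩ μ hw hy
    obtain ⟨ν, hν⟩ := h.exists_forall_add_mem_Ypos {-μ₀, -μ}
    have hνμ₀ : ν - μ₀ ∈ C.Ypos := sub_eq_add_neg ν μ₀ ▸ hν (-μ₀) (by simp)
    have hνμ : ν - μ ∈ C.Ypos := sub_eq_add_neg ν μ ▸ hν (-μ) (by simp)
    rwa [← h.bruhat_t_mul_iff hw hy hνμ, h.bruhat_t_mul_iff hw₀ hy₀ hνμ₀]
  · intro H
    obtain ⟨ν, hν⟩ := h.exists_forall_add_mem_Ypos {w.left.toAdd, y.left.toAdd}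
    have hw : C.t ν * w ∈ C.WextPlus :=
      h.mem_WextPlus_of_left_mem_Ypos (by simpa [SemiInf.Ctx.t] using hν w.left.toAdd (by simp))
    have hy : C.t ν * y ∈ C.WextPlus :=
      h.mem_WextPlus_of_left_mem_Ypos (by simpa [SemiInf.Ctx.t] using hν y.left.toAdd (by simp))
    exact ⟨ν, hw, hy, H ν hw hy⟩
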